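/- Let σ be a Dynkin automorphism of the Weyl group W of a finite root system and let W^σ be the fixed subgroup, which is a Coxeter group on the generators {s_η : η ∈ I_σ}. If w₀ = s_{η₁} s_{η₂} ⋯ s_{η_m} is a reduced expression of the longest element w₀ in the Coxeter group W^σ, then replacing each s_η by a fixed reduced expression of s_η in W yields a reduced expression of w₀ in W; in particular ℓ(w₀) = Σ_k ℓ(s_{η_k}) where ℓ is the length function of W. -/

import Mathlib

/-! For `w ∈ W`, let `N(w)(t) ∈ ℤ/2` be the parity of the number of occurrences of `t` in the left
inversion sequence of a word for `w`. The relation `N(uv)(t) = N(u)(t) + N(v)(u⁻¹tu)` shows that it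
depends only on `w`, and that a reflection `t` shortens `w` exactly when `N(w)(t) = 1`; this is the
strong exchange property.

Let `w ∈ W^σ`. Its left descent set is `σ`-stable, so for each orbit `η` either no `i ∈ η` is a
descent of `w`, and then `ℓ(s_η w) = ℓ(s_η) + ℓ(w)`, or all are. In particular `s_η` is the only
nontrivial element of `W^σ ∩ W_η`. Suppose that, for orbits `η` and `ζ` and some `x ∈ W^σ`, `η`
consists of descents of `x s_ζ` but not of `x`. Strong exchange gives `x⁻¹ W_η x ⊆ W_ζ`, so
`x⁻¹ s_η x` is a nontrivial element of `W^σ ∩ W_ζ`, whence `s_η x = x s_ζ`. Thus a descent of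
`s_{η₁} ⋯ s_{ηₘ}` in `η` lets one of the factors of `s_η s_{η₁} ⋯ s_{ηₘ}` be deleted along with
`s_η`, exactly as in the exchange condition. If this product is reduced in `W^σ`, that is
impossible, and the lengths add up. -/

open CoxeterSystem (alternatingWord)

section StrongExchange

variable {B W : Type*} [Group W] {M : CoxeterMatrix B} (cs : CoxeterSystem M W)

open Classical in
/-- The action of the simple reflection `s i` by the affine map `g ↦ δ_{s i} + g ∘ conj (s i)` on
functions `W → ZMod 2`. On the function counting occurrences in the left inversion sequence of `ω`,
it produces the one for `i :: ω`. -/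
noncomputable def inversionStep (i : B) : Function.End (W → ZMod 2) := fun g t =>
  (if t = cs.simple i then 1 else 0) + g (cs.simple i * t * cs.simple i)

open Classical in
theorem prod_map_inversionStep_apply (ω : List B) (g : W → ZMod 2) (t : W) :
    (ω.map (inversionStep cs)).prod g t =
      ((cs.leftInvSeq ω).count t : ZMod 2) + g ((cs.wordProd ω)⁻¹ * t * cs.wordProd ω) := by
  induction ω generalizing t with
  | nil =>
    simp only [List.map_nil, List.prod_nil, CoxeterSystem.leftInvSeq_nil, List.count_nil,
      Nat.cast_zero, zero_add, CoxeterSystem.wordProd_nil, inv_one, one_mul, mul_one]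
    rfl
  | cons i ω ih =>
    have conj_eq : MulAut.conj (cs.simple i) (cs.simple i * t * cs.simple i) = t := by
      simp [mul_assoc]
    have count_conj :
        (cs.leftInvSeq ω).count (cs.simple i * t * cs.simple i) =
          ((cs.leftInvSeq ω).map (MulAut.conj (cs.simple i))).count t := by
      rw [← List.count_map_of_injective _ _ (MulAut.conj (cs.simple i)).injective, conj_eq]
    rw [List.map_cons, List.prod_cons]
    change (if t = cs.simple i then 1 else 0) +
      (ω.map (inversionStep cs)).prod g (cs.simple i * t * cs.simple i) = _
    rw [ih, count_conj, CoxeterSystem.leftInvSeq, List.count_cons]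
    simp only [cs.wordProd_cons, mul_inv_rev, cs.inv_simple, mul_assoc, beq_iff_eq,
      eq_comm (a := t), Nat.cast_add, Nat.cast_ite, Nat.cast_one, Nat.cast_zero]
    abel

theorem prod_map_alternatingWord {G : Type*} [Monoid G] (f : B → G) (i j : B) (m : ℕ) :
    ((alternatingWord i j (2 * m)).map f).prod = (f i * f j) ^ m := by
  induction m with
  | zero => simp [alternatingWord]
  | succ m ih =>
    rw [Nat.mul_succ, CoxeterSystem.alternatingWord_succ', CoxeterSystem.alternatingWord_succ']
    simp [ih, pow_succ', mul_assoc, parity_simps]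

theorem leftInvSeq_alternatingWord_two_mul (i j : B) :
    cs.leftInvSeq (alternatingWord i j (2 * M i j)) =
      (cs.leftInvSeq (alternatingWord i j (2 * M i j))).take (M i j) ++
        (cs.leftInvSeq (alternatingWord i j (2 * M i j))).take (M i j) := by
  nth_rw 1 [← List.take_append_drop (M i j)
    (cs.leftInvSeq (alternatingWord i j (2 * M i j)))]
  congr 1
  refine List.ext_getElem ?_ fun k hk hk' => ?_
  · simp only [List.length_drop, List.length_take, CoxeterSystem.length_leftInvSeq,
      CoxeterSystem.length_alternatingWord]
    omega
  have hk_lt : k < M i j := hk'.trans_le (List.length_take_le _ _)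
  rw [List.getElem_drop, List.getElem_take,
    cs.getElem_leftInvSeq_alternatingWord _ _ _ _ (by omega),
    cs.getElem_leftInvSeq_alternatingWord _ _ _ _ (by omega),
    cs.prod_alternatingWord_eq_mul_pow, cs.prod_alternatingWord_eq_mul_pow]
  simp [parity_simps, show (2 * (M i j + k) + 1) / 2 = M i j + k by omega,
    show (2 * k + 1) / 2 = k by omega, pow_add]

theorem isLiftable_inversionStep : M.IsLiftable (inversionStep cs) := by
  classical
  intro i j
  have wordProd_eq_one : cs.wordProd (alternatingWord i j (2 * M i j)) = 1 := by
    simp [cs.prod_alternatingWord_eq_mul_pow]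
  funext g t
  rw [← prod_map_alternatingWord, prod_map_inversionStep_apply, wordProd_eq_one,
    leftInvSeq_alternatingWord_two_mul, List.count_append, Nat.cast_add, CharTwo.add_self_eq_zero]
  simp only [inv_one, one_mul, mul_one, zero_add]
  rfl

/-- The affine action of `W` on functions `W → ZMod 2` extending `inversionStep`. -/
noncomputable def inversionAction : W →* Function.End (W → ZMod 2) :=
  cs.lift ⟨inversionStep cs, isLiftable_inversionStep cs⟩

/-- The parity of the number of times that `t` occurs in the left inversion sequence of a word for
`w`; by `inversionParity_wordProd` it does not depend on the word. -/
noncomputable def inversionParity (w t : W) : ZMod 2 :=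
  inversionAction cs w 0 t

open Classical in
theorem inversionAction_wordProd_apply (ω : List B) (g : W → ZMod 2) (t : W) :
    inversionAction cs (cs.wordProd ω) g t =
      ((cs.leftInvSeq ω).count t : ZMod 2) + g ((cs.wordProd ω)⁻¹ * t * cs.wordProd ω) := by
  rw [← prod_map_inversionStep_apply, CoxeterSystem.wordProd, map_list_prod, List.map_map]
  have action_simple : inversionAction cs ∘ cs.simple = inversionStep cs :=
    funext (cs.lift_apply_simple (isLiftable_inversionStep cs))
  rw [action_simple]

open Classical in
theorem inversionParity_wordProd (ω : List B) (t : W) :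
    inversionParity cs (cs.wordProd ω) t = ((cs.leftInvSeq ω).count t : ZMod 2) := by
  simp [inversionParity, inversionAction_wordProd_apply]

theorem inversionParity_mul (u v t : W) :
    inversionParity cs (u * v) t = inversionParity cs u t + inversionParity cs v (u⁻¹ * t * u) := by
  classical
  obtain ⟨ω, rfl⟩ := cs.wordProd_surjective u
  rw [inversionParity_wordProd, inversionParity, map_mul]
  exact inversionAction_wordProd_apply cs ω _ t

theorem inversionParity_one (t : W) : inversionParity cs 1 t = 0 := by
  simpa using inversionParity_wordProd cs [] t

theorem inversionParity_self {t : W} (ht : cs.IsReflection t) : inversionParity cs t t = 1 := by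
  obtain ⟨u, i, rfl⟩ := ht
  have simple_self : inversionParity cs (cs.simple i) (cs.simple i) = 1 := by
    simpa using inversionParity_wordProd cs [i] (cs.simple i)
  have cancel := inversionParity_mul cs u u⁻¹ (u * cs.simple i * u⁻¹)
  rw [mul_inv_cancel, inversionParity_one] at cancel
  rw [inversionParity_mul, inversionParity_mul]
  simp only [mul_assoc, mul_inv_rev, inv_mul_cancel_left, inv_mul_cancel, mul_one, cs.inv_simple,
    cs.simple_mul_simple_cancel_left, simple_self] at cancel ⊢
  linear_combination -cancel

theorem mem_leftInvSeq_of_inversionParity_ne_zero {ω : List B} {t : W}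
    (h : inversionParity cs (cs.wordProd ω) t ≠ 0) : t ∈ cs.leftInvSeq ω := by
  classical
  contrapose! h
  rw [inversionParity_wordProd, List.count_eq_zero_of_not_mem h, Nat.cast_zero]

theorem isLeftInversion_of_inversionParity_ne_zero {w t : W} (h : inversionParity cs w t ≠ 0) :
    cs.IsLeftInversion w t := by
  obtain ⟨ω, hω, rfl⟩ := cs.exists_isReduced w
  exact cs.isLeftInversion_of_mem_leftInvSeq hω (mem_leftInvSeq_of_inversionParity_ne_zero cs h)

theorem isLeftInversion_iff_inversionParity_ne_zero {w t : W} (ht : cs.IsReflection t) :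
    cs.IsLeftInversion w t ↔ inversionParity cs w t ≠ 0 := by
  refine ⟨fun h hzero => ?_, isLeftInversion_of_inversionParity_ne_zero cs⟩
  have parity_mul : inversionParity cs (t * w) t = 1 := by
    rw [inversionParity_mul, inversionParity_self cs ht, inv_mul_cancel, one_mul, hzero, add_zero]
  exact ht.not_isLeftInversion_mul_right_iff.mpr h
    (isLeftInversion_of_inversionParity_ne_zero cs (parity_mul ▸ one_ne_zero))

theorem exists_mul_wordProd_eq_wordProd_eraseIdx {ω : List B} {t : W}
    (h : cs.IsLeftInversion (cs.wordProd ω) t) :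
    ∃ k < ω.length, t * cs.wordProd ω = cs.wordProd (ω.eraseIdx k) := by
  obtain ⟨k, hk, rfl⟩ := List.mem_iff_getElem.mp <|
    mem_leftInvSeq_of_inversionParity_ne_zero cs <|
      (isLeftInversion_iff_inversionParity_ne_zero cs h.1).mp h
  refine ⟨k, by simpa using hk, ?_⟩
  rw [← cs.getD_leftInvSeq_mul_wordProd, List.getD_eq_getElem _ 1 hk]

theorem isLeftInversion_conj_of_isLeftDescent_mul {x y : W} {i : B}
    (hxy : cs.IsLeftDescent (x * y) i) (hx : ¬ cs.IsLeftDescent x i) :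
    cs.IsLeftInversion y (x⁻¹ * cs.simple i * x) := by
  rw [← cs.isLeftInversion_simple_iff_isLeftDescent,
    isLeftInversion_iff_inversionParity_ne_zero cs (cs.isReflection_simple i)] at hxy hx
  apply isLeftInversion_of_inversionParity_ne_zero
  rwa [inversionParity_mul, not_not.mp hx, zero_add] at hxy

theorem exists_isReduced_sublist (ω : List B) :
    ∃ ω' : List B, ω'.Sublist ω ∧ cs.IsReduced ω' ∧ cs.wordProd ω' = cs.wordProd ω := by
  induction ω with
  | nil => exact ⟨[], List.Sublist.refl _, by simp [CoxeterSystem.IsReduced], rfl⟩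
  | cons i ω ih =>
    obtain ⟨ω', hsub, hred, hprod⟩ := ih
    rw [cs.wordProd_cons, ← hprod]
    by_cases hi : cs.IsLeftDescent (cs.wordProd ω') i
    · obtain ⟨k, hk, herase⟩ := exists_mul_wordProd_eq_wordProd_eraseIdx cs
        ((cs.isLeftInversion_simple_iff_isLeftDescent _ i).mpr hi)
      refine ⟨ω'.eraseIdx k, ((ω'.eraseIdx_sublist k).trans hsub).cons i, ?_, herase.symm⟩
      have := List.length_eraseIdx_add_one hk
      have := cs.isLeftDescent_iff.mp hi
      have := hred.eq
      rw [CoxeterSystem.IsReduced, ← herase]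
      omega
    · refine ⟨i :: ω', hsub.cons_cons i, ?_, cs.wordProd_cons i ω'⟩
      rw [CoxeterSystem.IsReduced, cs.wordProd_cons, cs.not_isLeftDescent_iff.mp hi, hred.eq,
        List.length_cons]

end StrongExchange

section Parabolic

variable {B W : Type*} [Group W] {M : CoxeterMatrix B} (cs : CoxeterSystem M W) {J : Set B}

/-- The standard parabolic subgroup `W_J`, generated by the simple reflections in `J`. -/
def parabolicSubgroup (J : Set B) : Subgroup W :=
  Subgroup.closure (cs.simple '' J)

variable {cs}

theorem simple_mem_parabolicSubgroup {i : B} (hi : i ∈ J) :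
    cs.simple i ∈ parabolicSubgroup cs J :=
  Subgroup.subset_closure ⟨i, hi, rfl⟩

theorem wordProd_mem_parabolicSubgroup {ω : List B} (hω : ∀ i ∈ ω, i ∈ J) :
    cs.wordProd ω ∈ parabolicSubgroup cs J := by
  refine list_prod_mem fun w hw => ?_
  obtain ⟨i, hi, rfl⟩ := List.mem_map.mp hw
  exact simple_mem_parabolicSubgroup (hω i hi)

theorem exists_wordProd_eq_of_mem_parabolicSubgroup {w : W} (hw : w ∈ parabolicSubgroup cs J) :
    ∃ ω : List B, (∀ i ∈ ω, i ∈ J) ∧ cs.IsReduced ω ∧ cs.wordProd ω = w := by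
  obtain ⟨ω, hω, rfl⟩ : ∃ ω : List B, (∀ i ∈ ω, i ∈ J) ∧ cs.wordProd ω = w := by
    induction hw using Subgroup.closure_induction with
    | mem x hx =>
      obtain ⟨i, hi, rfl⟩ := hx
      exact ⟨[i], by simpa using hi, cs.wordProd_singleton i⟩
    | one => exact ⟨[], by simp, cs.wordProd_nil⟩
    | mul x y _ _ ihx ihy =>
      obtain ⟨α, hα, rfl⟩ := ihx
      obtain ⟨β, hβ, rfl⟩ := ihy
      exact ⟨α ++ β, by simpa [or_imp, forall_and] using ⟨hα, hβ⟩, cs.wordProd_append α β⟩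
    | inv x _ ih =>
      obtain ⟨α, hα, rfl⟩ := ih
      exact ⟨α.reverse, by simpa using hα, cs.wordProd_reverse α⟩
  obtain ⟨ω', hsub, hred, hprod⟩ := exists_isReduced_sublist cs ω
  exact ⟨ω', fun i hi => hω i (hsub.subset hi), hred, hprod⟩

@[elab_as_elim]
theorem parabolicSubgroup_induction {p : (w : W) → w ∈ parabolicSubgroup cs J → Prop}
    (one : p 1 (one_mem _))
    (simple_mul : ∀ (i : B) (hi : i ∈ J) (v : W) (hv : v ∈ parabolicSubgroup cs J),
      ¬ cs.IsLeftDescent v i → p v hv →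
        p (cs.simple i * v) (mul_mem (simple_mem_parabolicSubgroup hi) hv))
    {w : W} (hw : w ∈ parabolicSubgroup cs J) : p w hw := by
  obtain ⟨ω, hω, hred, rfl⟩ := exists_wordProd_eq_of_mem_parabolicSubgroup hw
  induction ω with
  | nil => simpa using one
  | cons i ω ih =>
    have hω' : ∀ k ∈ ω, k ∈ J := fun k hk => hω k (List.mem_cons_of_mem i hk)
    have hred' : cs.IsReduced ω := hred.drop 1
    have hmem : cs.wordProd ω ∈ parabolicSubgroup cs J := wordProd_mem_parabolicSubgroup hω'
    simp only [cs.wordProd_cons]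
    refine simple_mul i (hω i List.mem_cons_self) _ hmem ?_ (ih hω' hred' hmem)
    rw [cs.not_isLeftDescent_iff, ← cs.wordProd_cons, hred.eq, hred'.eq, List.length_cons]

theorem exists_isLeftDescent_of_mem_parabolicSubgroup {w : W} (hw : w ∈ parabolicSubgroup cs J)
    (hne : w ≠ 1) : ∃ i ∈ J, cs.IsLeftDescent w i := by
  revert hne
  induction hw using parabolicSubgroup_induction with
  | one => exact fun h => absurd rfl h
  | simple_mul i hi v _ hv _ =>
    refine fun _ => ⟨i, hi, ?_⟩
    rwa [cs.isLeftDescent_iff_not_isLeftDescent_mul, cs.simple_mul_simple_cancel_left]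

theorem mem_parabolicSubgroup_of_isLeftInversion {w t : W} (hw : w ∈ parabolicSubgroup cs J)
    (ht : cs.IsLeftInversion w t) : t ∈ parabolicSubgroup cs J := by
  obtain ⟨ω, hω, -, rfl⟩ := exists_wordProd_eq_of_mem_parabolicSubgroup hw
  obtain ⟨k, -, herase⟩ := exists_mul_wordProd_eq_wordProd_eraseIdx cs ht
  rw [eq_mul_inv_of_mul_eq herase]
  exact mul_mem
    (wordProd_mem_parabolicSubgroup fun i hi => hω i (List.mem_of_mem_eraseIdx hi)) (inv_mem hw)

theorem length_mul_of_minimal {m : W}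
    (hm : ∀ v ∈ parabolicSubgroup cs J, cs.length m ≤ cs.length (v * m))
    {u : W} (hu : u ∈ parabolicSubgroup cs J) :
    cs.length (u * m) = cs.length u + cs.length m := by
  induction hu using parabolicSubgroup_induction with
  | one => simp
  | simple_mul i hi v hv hvi ih =>
    have hvm : ¬ cs.IsLeftDescent (v * m) i := fun hdesc =>
      ((isLeftInversion_conj_of_isLeftDescent_mul cs hdesc hvi).2).not_ge <| hm _ <|
        mul_mem (mul_mem (inv_mem hv) (simple_mem_parabolicSubgroup hi)) hv
    rw [mul_assoc, cs.not_isLeftDescent_iff.mp hvm, cs.not_isLeftDescent_iff.mp hvi, ih]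
    omega

theorem length_mul_of_forall_not_isLeftDescent {w : W} (hw : ∀ i ∈ J, ¬ cs.IsLeftDescent w i)
    {u : W} (hu : u ∈ parabolicSubgroup cs J) :
    cs.length (u * w) = cs.length u + cs.length w := by
  obtain ⟨v, hv, hmin⟩ : ∃ v ∈ parabolicSubgroup cs J, ∀ v' ∈ parabolicSubgroup cs J,
      cs.length (v * w) ≤ cs.length (v' * w) := by
    obtain ⟨v, hv⟩ := exists_minimalFor_of_wellFoundedLT (· ∈ parabolicSubgroup cs J)
      (fun v => cs.length (v * w)) ⟨1, one_mem _⟩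
    exact ⟨v, hv.1, fun v' hv' => hv.le hv'⟩
  have length_mul : ∀ x ∈ parabolicSubgroup cs J,
      cs.length (x * (v * w)) = cs.length x + cs.length (v * w) := fun x =>
    length_mul_of_minimal fun v' hv' => by
      simpa only [mul_assoc] using hmin _ (mul_mem hv' hv)
  obtain rfl : v = 1 := by
    by_contra hne
    obtain ⟨i, hi, hdesc⟩ :=
      exists_isLeftDescent_of_mem_parabolicSubgroup (inv_mem hv) (inv_ne_one.mpr hne)
    refine hw i hi ?_
    have hw_eq := length_mul _ (inv_mem hv)
    have hsw_eq := length_mul _ (mul_mem (simple_mem_parabolicSubgroup hi) (inv_mem hv))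
    simp only [mul_assoc, inv_mul_cancel_left] at hw_eq hsw_eq
    rw [CoxeterSystem.IsLeftDescent, hw_eq, hsw_eq]
    exact Nat.add_lt_add_right hdesc _
  simpa using length_mul u hu

theorem length_inv_mul_add_of_forall_isLeftDescent {w : W} (hw : ∀ i ∈ J, cs.IsLeftDescent w i)
    {u : W} (hu : u ∈ parabolicSubgroup cs J) :
    cs.length (u⁻¹ * w) + cs.length u = cs.length w := by
  induction hu using parabolicSubgroup_induction with
  | one => simp
  | simple_mul i hi v _ hvi ih =>
    have hinv : cs.IsLeftInversion (v⁻¹ * w) (v⁻¹ * cs.simple i * v) :=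
      isLeftInversion_conj_of_isLeftDescent_mul cs (by simpa using hw i hi) hvi
    have hlt : cs.length ((cs.simple i * v)⁻¹ * w) < cs.length (v⁻¹ * w) := by
      simpa [mul_assoc] using hinv.2
    have hle : cs.length w ≤ cs.length ((cs.simple i * v)⁻¹ * w) + cs.length (cs.simple i * v) := by
      simpa only [cs.length_inv] using cs.length_le_length_mul_add_left (cs.simple i * v)⁻¹ w
    have hsv := cs.not_isLeftDescent_iff.mp hvi
    omega

variable (cs J) in
/-- `s` is a longest element of the parabolic subgroup `W_J`. -/
structure IsLongestElement (s : W) : Prop where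
  mem : s ∈ parabolicSubgroup cs J
  length_le : ∀ u ∈ parabolicSubgroup cs J, cs.length u ≤ cs.length s

theorem IsLongestElement.eq_of_forall_isLeftDescent {s w : W} (hs : IsLongestElement cs J s)
    (hw : w ∈ parabolicSubgroup cs J) (hdesc : ∀ i ∈ J, cs.IsLeftDescent w i) : w = s := by
  have hadd := length_inv_mul_add_of_forall_isLeftDescent hdesc hs.mem
  have hle := hs.length_le w hw
  have hzero : cs.length (s⁻¹ * w) = 0 := by omega
  exact (inv_mul_eq_one.mp (cs.length_eq_zero_iff.mp hzero)).symm

end Parabolic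

section Homomorphisms

variable {B B' W W' : Type*} [Group W] [Group W'] {M : CoxeterMatrix B} {M' : CoxeterMatrix B'}
  {cs : CoxeterSystem M W} {cs' : CoxeterSystem M' W'}

theorem map_wordProd_eq_wordProd_flatMap {f : W' →* W} {r : B' → List B}
    (hf : ∀ j, f (cs'.simple j) = cs.wordProd (r j)) (ω : List B') :
    f (cs'.wordProd ω) = cs.wordProd (ω.flatMap r) := by
  induction ω with
  | nil => simp
  | cons j ω ih =>
    rw [cs'.wordProd_cons, map_mul, hf, ih, List.flatMap_cons, cs.wordProd_append]

theorem length_map_le {f : W' →* W} {e : B' → B} (hf : ∀ j, f (cs'.simple j) = cs.simple (e j))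
    (w : W') : cs.length (f w) ≤ cs'.length w := by
  obtain ⟨ω, hω, rfl⟩ := cs'.exists_isReduced w
  rw [map_wordProd_eq_wordProd_flatMap (r := fun j => [e j]) (by simpa using hf), hω.eq]
  simpa using cs.length_wordProd_le (ω.flatMap fun j => [e j])

theorem length_mulEquiv {f : W' ≃* W} {e : B' ≃ B}
    (hf : ∀ j, f (cs'.simple j) = cs.simple (e j)) (w : W') :
    cs.length (f w) = cs'.length w := by
  refine le_antisymm (length_map_le (f := f.toMonoidHom) hf w) ?_
  have hf_symm : ∀ i, f.symm (cs.simple i) = cs'.simple (e.symm i) := fun i => by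
    rw [MulEquiv.symm_apply_eq, hf, e.apply_symm_apply]
  simpa using length_map_le (f := f.symm.toMonoidHom) hf_symm (f w)

theorem isLeftDescent_mulEquiv_iff {f : W' ≃* W} {e : B' ≃ B}
    (hf : ∀ j, f (cs'.simple j) = cs.simple (e j)) {w : W'} {j : B'} :
    cs.IsLeftDescent (f w) (e j) ↔ cs'.IsLeftDescent w j := by
  rw [CoxeterSystem.IsLeftDescent, CoxeterSystem.IsLeftDescent, ← hf, ← map_mul,
    length_mulEquiv hf, length_mulEquiv hf]

open scoped Pointwise in
theorem isLeftDescent_iff_of_sameCycle {φ : W ≃* W} {e : Equiv.Perm B}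
    (hφ : ∀ i, φ (cs.simple i) = cs.simple (e i)) {w : W} (hw : φ w = w) {i i' : B}
    (h : e.SameCycle i i') : cs.IsLeftDescent w i ↔ cs.IsLeftDescent w i' := by
  obtain ⟨n, rfl⟩ := h
  have he : e ∈ MulAction.stabilizer (Equiv.Perm B) {i | cs.IsLeftDescent w i} :=
    MulAction.mem_stabilizer_set.mpr fun i => by
      simpa only [hw] using! isLeftDescent_mulEquiv_iff (w := w) (j := i) hφ
  exact (MulAction.mem_stabilizer_set.mp (zpow_mem he n) i).symm

theorem sameCycle_of_forall_exists_iterate_eq {e : Equiv.Perm B} {s : Set B} {i₀ : B}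
    (hs : ∀ i ∈ s, ∃ n : ℕ, e^[n] i₀ = i) : ∀ i ∈ s, ∀ i' ∈ s, e.SameCycle i i' := by
  have sameCycle_base : ∀ i ∈ s, e.SameCycle i₀ i := fun i hi =>
    (hs i hi).imp' Nat.cast fun n hn => by rwa [zpow_natCast, ← Equiv.Perm.iterate_eq_pow]
  exact fun i hi i' hi' => (sameCycle_base i hi).symm.trans (sameCycle_base i' hi')

end Homomorphisms

section Folding

variable {B B' W W' : Type*} [Group W] [Group W'] {M : CoxeterMatrix B} {M' : CoxeterMatrix B'}

/-- The Coxeter system `cs'` is embedded by `ι` into the fixed subgroup of a diagram automorphism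
`φ` of `cs`, its simple reflections being longest elements of the parabolic subgroups `W_{η j}`.
Each `η j` is only required to lie in one orbit of the permutation `e` of the simple reflections. -/
structure IsFolding (cs : CoxeterSystem M W) (cs' : CoxeterSystem M' W') (e : Equiv.Perm B)
    (φ : W ≃* W) (ι : W' →* W) (η : B' → Set B) : Prop where
  map_simple : ∀ i, φ (cs.simple i) = cs.simple (e i)
  injective : Function.Injective ι
  map_eq_self : ∀ w, φ (ι w) = ι w
  sameCycle : ∀ j, ∀ i ∈ η j, ∀ i' ∈ η j, e.SameCycle i i'
  isLongestElement : ∀ j, IsLongestElement cs (η j) (ι (cs'.simple j))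

namespace IsFolding

variable {cs : CoxeterSystem M W} {cs' : CoxeterSystem M' W'} {e : Equiv.Perm B} {φ : W ≃* W}
  {ι : W' →* W} {η : B' → Set B}

theorem forall_isLeftDescent (h : IsFolding cs cs' e φ ι η) {w : W} (hw : φ w = w) {j : B'}
    (hj : ∃ i ∈ η j, cs.IsLeftDescent w i) : ∀ i ∈ η j, cs.IsLeftDescent w i := by
  obtain ⟨i, hi, hdesc⟩ := hj
  exact fun i' hi' =>
    (isLeftDescent_iff_of_sameCycle h.map_simple hw (h.sameCycle j i hi i' hi')).mp hdesc

theorem eq_map_simple (h : IsFolding cs cs' e φ ι η) {w : W} (hw : φ w = w) {j : B'}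
    (hj : w ∈ parabolicSubgroup cs (η j)) (hne : w ≠ 1) : w = ι (cs'.simple j) :=
  (h.isLongestElement j).eq_of_forall_isLeftDescent hj
    (h.forall_isLeftDescent hw (exists_isLeftDescent_of_mem_parabolicSubgroup hj hne))

theorem map_simple_ne_one (h : IsFolding cs cs' e φ ι η) (j : B') : ι (cs'.simple j) ≠ 1 := by
  intro hone
  have := cs'.length_simple j
  rw [(map_eq_one_iff ι h.injective).mp hone, cs'.length_one] at this
  exact zero_ne_one this

theorem simple_mul_eq_mul_simple (h : IsFolding cs cs' e φ ι η) {x : W'} {j p : B'}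
    (hxp : ∀ i ∈ η j, cs.IsLeftDescent (ι (x * cs'.simple p)) i)
    (hx : ∀ i ∈ η j, ¬ cs.IsLeftDescent (ι x) i) :
    cs'.simple j * x = x * cs'.simple p := by
  have hconj : parabolicSubgroup cs (η j) ≤
      (parabolicSubgroup cs (η p)).comap (MulAut.conj (ι x)⁻¹).toMonoidHom := by
    refine (Subgroup.closure_le _).mpr ?_
    rintro _ ⟨i, hi, rfl⟩
    have hinv : cs.IsLeftInversion (ι (cs'.simple p)) ((ι x)⁻¹ * cs.simple i * ι x) :=
      isLeftInversion_conj_of_isLeftDescent_mul cs (by simpa using hxp i hi) (hx i hi)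
    simpa using mem_parabolicSubgroup_of_isLeftInversion (h.isLongestElement p).mem hinv
  have hmem : ι (x⁻¹ * cs'.simple j * x) ∈ parabolicSubgroup cs (η p) := by
    simpa using hconj (h.isLongestElement j).mem
  have hne : ι (x⁻¹ * cs'.simple j * x) ≠ 1 := by
    simpa [mul_assoc, inv_mul_eq_one] using h.map_simple_ne_one j
  have heq := h.injective (h.eq_map_simple (h.map_eq_self _) hmem hne)
  rw [← heq, mul_assoc, mul_inv_cancel_left]

theorem exists_simple_mul_wordProd_eq_wordProd_eraseIdx (h : IsFolding cs cs' e φ ι η)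
    {ω : List B'} {j : B'} (hj : ∃ i ∈ η j, cs.IsLeftDescent (ι (cs'.wordProd ω)) i) :
    ∃ k < ω.length, cs'.simple j * cs'.wordProd ω = cs'.wordProd (ω.eraseIdx k) := by
  induction ω using List.reverseRecOn with
  | nil => simp [cs.not_isLeftDescent_one] at hj
  | append_singleton ω p ih =>
    rw [cs'.wordProd_append, cs'.wordProd_singleton] at hj ⊢
    by_cases hω : ∃ i ∈ η j, cs.IsLeftDescent (ι (cs'.wordProd ω)) i
    · obtain ⟨k, hk, herase⟩ := ih hω
      refine ⟨k, by simp only [List.length_append]; omega, ?_⟩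
      rw [List.eraseIdx_append_of_lt_length hk, cs'.wordProd_append, cs'.wordProd_singleton,
        ← mul_assoc, herase]
    · push Not at hω
      refine ⟨ω.length, by simp, ?_⟩
      rw [← mul_assoc,
        h.simple_mul_eq_mul_simple (h.forall_isLeftDescent (h.map_eq_self _) hj) hω,
        cs'.simple_mul_simple_cancel_right]
      simp [List.eraseIdx_append_of_length_le]

theorem length_map_wordProd (h : IsFolding cs cs' e φ ι η) {ω : List B'} (hω : cs'.IsReduced ω) :
    cs.length (ι (cs'.wordProd ω)) = (ω.map fun j => cs.length (ι (cs'.simple j))).sum := by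
  induction ω with
  | nil => simp
  | cons j ω ih =>
    have hω' : cs'.IsReduced ω := hω.drop 1
    have hdesc : ∀ i ∈ η j, ¬ cs.IsLeftDescent (ι (cs'.wordProd ω)) i := by
      intro i hi hi_desc
      obtain ⟨k, hk, herase⟩ := h.exists_simple_mul_wordProd_eq_wordProd_eraseIdx ⟨i, hi, hi_desc⟩
      have hle := cs'.length_wordProd_le (ω.eraseIdx k)
      have hlen := List.length_eraseIdx_add_one hk
      have hred := hω.eq
      rw [cs'.wordProd_cons, herase, List.length_cons] at hred
      omega
    rw [cs'.wordProd_cons, map_mul,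
      length_mul_of_forall_not_isLeftDescent hdesc (h.isLongestElement j).mem, ih hω',
      List.map_cons, List.sum_cons]

end IsFolding

end Folding

theorem stmt12_general {B B' W W' : Type*} [Group W] [Group W']
    {M : CoxeterMatrix B} {cs : CoxeterSystem M W} {M' : CoxeterMatrix B'}
    {cs' : CoxeterSystem M' W'} {e : Equiv.Perm B} {φ : W ≃* W} {ι : W' →* W} {η : B' → Set B}
    (h : IsFolding cs cs' e φ ι η) {ω : List B'} (hω : cs'.IsReduced ω) {r : B' → List B}
    (hr : ∀ j, cs.wordProd (r j) = ι (cs'.simple j) ∧ cs.IsReduced (r j)) :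
    cs.wordProd (ω.flatMap r) = ι (cs'.wordProd ω) ∧ cs.IsReduced (ω.flatMap r) ∧
      cs.length (ι (cs'.wordProd ω)) = (ω.map fun j => cs.length (ι (cs'.simple j))).sum := by
  have hprod : ι (cs'.wordProd ω) = cs.wordProd (ω.flatMap r) :=
    map_wordProd_eq_wordProd_flatMap (fun j => (hr j).1.symm) ω
  have hr_length : ∀ j, (r j).length = cs.length (ι (cs'.simple j)) := fun j => by
    rw [← (hr j).1, (hr j).2.eq]
  refine ⟨hprod.symm, ?_, h.length_map_wordProd hω⟩
  rw [CoxeterSystem.IsReduced, ← hprod, h.length_map_wordProd hω, List.length_flatMap]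
  simp only [hr_length]

theorem stmt12 {B B' W W' : Type*} [Group W] [Group W'] [Finite W]
    {M : CoxeterMatrix B} (cs : CoxeterSystem M W)
    {M' : CoxeterMatrix B'} (cs' : CoxeterSystem M' W')
    (e : B ≃ B) (hM : ∀ i j, M (e i) (e j) = M i j)
    (φ : W ≃* W) (hφ : ∀ i, φ (cs.simple i) = cs.simple (e i))
    (ι : W' →* W) (hι : Function.Injective ι)
    (hrange : Set.range ι = {w : W | φ w = w})  -- ι identifies W' with W^σ
    (η : B' → Set B)
    (horb : ∀ j, ∃ i₀ ∈ η j, ∀ i, i ∈ η j ↔ ∃ n : ℕ, (⇑e)^[n] i₀ = i)  -- the σ-orbits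
    -- ι(simple j) is the longest element s_η of the parabolic subgroup W_{η j}:
    (hmem : ∀ j, ι (cs'.simple j) ∈ Subgroup.closure (cs.simple '' η j))
    (hmax : ∀ j, ∀ u ∈ Subgroup.closure (cs.simple '' η j),
      cs.length u ≤ cs.length (ι (cs'.simple j)))
    (w₀ : W) (w₀' : W') (hw₀ : ι w₀' = w₀)
    (hlongest : ∀ w : W, cs.length w ≤ cs.length w₀)       -- w₀ is longest in W
    (hlongest' : ∀ w : W', cs'.length w ≤ cs'.length w₀')  -- w₀' is longest in W^σ
    (ω : List B') (hred : cs'.IsReduced ω) (hprod : cs'.wordProd ω = w₀')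
    (r : B' → List B)
    (hr : ∀ j, cs.wordProd (r j) = ι (cs'.simple j) ∧ cs.IsReduced (r j)) :
    cs.wordProd (ω.flatMap r) = w₀ ∧ cs.IsReduced (ω.flatMap r) ∧
      cs.length w₀ = (ω.map (fun j => cs.length (ι (cs'.simple j)))).sum := by
  subst hw₀ hprod
  exact stmt12_general ⟨hφ, hι, fun w => hrange.subset (Set.mem_range_self w),
    fun j => (horb j).elim fun _ h => sameCycle_of_forall_exists_iterate_eq fun i => (h.2 i).mp,
    fun j => ⟨hmem j, hmax j⟩⟩ hred hr
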